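/- arXiv:1802.08312 — 5 statements merged into one kernel-verified Lean document; each statement's English description precedes it below -/
import Mathlib

section
/- Let Σ be a finite nonempty type, let f : ℝ → ℝ be convex with f(1) = 0, let p₁, p₂ be probability distributions on Σ that are strictly positive everywhere, let q₁, q₂ be probability distributions on Σ, and let λ ∈ [0,1]. Then the f-divergence is jointly convex: D_f(λ·p₁ + (1−λ)·p₂, λ·q₁ + (1−λ)·q₂) ≤ λ·D_f(p₁,q₁) + (1−λ)·D_f(p₂,q₂). -/
/-!
Each summand is the perspective `(x, t) ↦ t * f (x / t)` of `f` evaluated at `(q σ, p σ)`.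
The perspective of a convex function is jointly convex on `t > 0`: with `P = a * s + b * t`, the
mixed ratio `(a * x + b * y) / P` is the average of `x / s` and `y / t` with weights `a * s / P`
and `b * t / P`, so the claim is the convexity inequality for `f` multiplied by `P`.
Summing over `σ` gives joint convexity of the divergence.
-/

open Finset

/-- Joint convexity of the perspective `(x, t) ↦ t * f (x / t)` of a convex function `f`. -/
lemma perspective_convex {f : ℝ → ℝ} (hf : ConvexOn ℝ Set.univ f) {a b s t x y : ℝ}
    (ha : 0 ≤ a) (hb : 0 ≤ b) (hs : 0 < s) (ht : 0 < t) (hP : 0 < a * s + b * t) :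
    (a * s + b * t) * f ((a * x + b * y) / (a * s + b * t))
      ≤ a * (s * f (x / s)) + b * (t * f (y / t)) := by
  have hu : 0 ≤ a * s / (a * s + b * t) := by positivity
  have hv : 0 ≤ b * t / (a * s + b * t) := by positivity
  have huv : a * s / (a * s + b * t) + b * t / (a * s + b * t) = 1 := by
    rw [← add_div, div_self hP.ne']
  have h := hf.2 (Set.mem_univ (x / s)) (Set.mem_univ (y / t)) hu hv huv
  simp only [smul_eq_mul] at h
  have harg : a * s / (a * s + b * t) * (x / s) + b * t / (a * s + b * t) * (y / t)
      = (a * x + b * y) / (a * s + b * t) := by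
    field_simp
  rw [harg] at h
  calc _ ≤ _ := mul_le_mul_of_nonneg_left h hP.le
    _ = _ := by field_simp

/-- Joint convexity of the f-divergence `D_f(p,q) = ∑ σ, p σ * f (q σ / p σ)`. -/
theorem fDiv_jointly_convex {S : Type*} [Fintype S] [Nonempty S]
    (f : ℝ → ℝ) (hf : ConvexOn ℝ Set.univ f) (hf1 : f 1 = 0)
    (p₁ p₂ q₁ q₂ : S → ℝ) (l : ℝ)
    (hp₁_pos : ∀ σ, 0 < p₁ σ) (hp₁_sum : ∑ σ, p₁ σ = 1)
    (hp₂_pos : ∀ σ, 0 < p₂ σ) (hp₂_sum : ∑ σ, p₂ σ = 1)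
    (hq₁_nonneg : ∀ σ, 0 ≤ q₁ σ) (hq₁_sum : ∑ σ, q₁ σ = 1)
    (hq₂_nonneg : ∀ σ, 0 ≤ q₂ σ) (hq₂_sum : ∑ σ, q₂ σ = 1)
    (hl0 : 0 ≤ l) (hl1 : l ≤ 1) :
    ∑ σ, (l * p₁ σ + (1 - l) * p₂ σ) *
        f ((l * q₁ σ + (1 - l) * q₂ σ) / (l * p₁ σ + (1 - l) * p₂ σ))
      ≤ l * ∑ σ, p₁ σ * f (q₁ σ / p₁ σ)
        + (1 - l) * ∑ σ, p₂ σ * f (q₂ σ / p₂ σ) := by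
  rw [mul_sum, mul_sum, ← sum_add_distrib]
  refine sum_le_sum fun σ _ => ?_
  have hP : 0 < l * p₁ σ + (1 - l) * p₂ σ := by
    rcases hl0.eq_or_lt with rfl | hl
    · simpa using hp₂_pos σ
    · exact add_pos_of_pos_of_nonneg (mul_pos hl (hp₁_pos σ))
        (mul_nonneg (sub_nonneg.2 hl1) (hp₂_pos σ).le)
  exact perspective_convex hf hl0 (sub_nonneg.2 hl1) (hp₁_pos σ) (hp₂_pos σ) hP
end

section
/- Data processing inequality for f-mutual information (kernel version): Let Σ_X, Σ_{X'}, Σ_Y be finite nonempty types, let J be a joint probability distribution on Σ_X × Σ_Y with J(x,y) > 0 for all (x,y), let K assign to each x ∈ Σ_X a probability distribution K(x) on Σ_{X'} with K(x)(x') > 0 for all x, x', and let f : ℝ → ℝ be convex with f(1) = 0. Define the joint distribution J' on Σ_{X'} × Σ_Y by J'(x',y) := Σ_x J(x,y)·K(x)(x') (i.e., X' is obtained from X by the channel K, conditionally independent of Y given X). Then MI^f(J') ≤ MI^f(J). -/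
/-!
For fixed `(x', y)`, writing `p`, `q` for the marginals of `J`, the argument of `f` on the left is
`(∑ x, p x * q y * K x x') / (∑ x, J x y * K x x')`, since the channel preserves the `B`-marginal.
This is a ratio of sums, so the generalized log-sum inequality (Jensen for the perspective of `f`,
`sum_mul_map_div_le`) bounds the corresponding term by
`∑ x, J x y * K x x' * f (p x * q y / J x y)`, the factor `K x x'` cancelling inside `f`.
Summing over `x'` and using `∑ x', K x x' = 1` gives the right-hand side.
-/

open Finset

/-- The f-mutual information of a joint distribution `J` on `A × B`:
`MI^f(J) = ∑ x y, J x y * f (p x * q y / J x y)` where `p`, `q` are the marginals. -/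
noncomputable def MIf {A B : Type*} [Fintype A] [Fintype B] (f : ℝ → ℝ) (J : A → B → ℝ) : ℝ :=
  ∑ x, ∑ y, J x y * f ((∑ y', J x y') * (∑ x', J x' y) / J x y)

/-- The generalized log-sum inequality: the perspective `(w, a) ↦ w * f (a / w)` of a convex `f`
is subadditive. It is Jensen's inequality at the points `a i / w i` with weights `w i`. -/
theorem sum_mul_map_div_le {ι : Type*} [Fintype ι] [Nonempty ι] {f : ℝ → ℝ}
    (hf : ConvexOn ℝ Set.univ f) (w a : ι → ℝ) (hw : ∀ i, 0 < w i) :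
    (∑ i, w i) * f ((∑ i, a i) / ∑ i, w i) ≤ ∑ i, w i * f (a i / w i) := by
  have hW : 0 < ∑ i, w i := Finset.sum_pos (fun i _ => hw i) Finset.univ_nonempty
  have h := hf.map_centerMass_le (t := Finset.univ) (w := w) (p := fun i => a i / w i)
    (fun i _ => (hw i).le) hW (fun i _ => Set.mem_univ _)
  have ha : ∀ i, w i * (a i / w i) = a i := fun i => mul_div_cancel₀ _ (hw i).ne'
  simp only [Finset.centerMass, smul_eq_mul, Function.comp_apply, ha, inv_mul_eq_div] at h
  rwa [le_div_iff₀' hW] at h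

/-- Data processing inequality for f-mutual information (kernel version):
if `X'` is obtained from `X` through the channel `K` (conditionally independent
of `Y` given `X`), then `MI^f(X';Y) ≤ MI^f(X;Y)`. -/
theorem MIf_data_processing_kernel {A A' B : Type*}
    [Fintype A] [Nonempty A] [Fintype A'] [Nonempty A'] [Fintype B] [Nonempty B]
    (J : A → B → ℝ) (K : A → A' → ℝ) (f : ℝ → ℝ)
    (hJpos : ∀ x y, 0 < J x y) (hJsum : ∑ x, ∑ y, J x y = 1)
    (hKpos : ∀ x x', 0 < K x x') (hKsum : ∀ x, ∑ x', K x x' = 1)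
    (hf : ConvexOn ℝ Set.univ f) (hf1 : f 1 = 0) :
    MIf f (fun x' y => ∑ x, J x y * K x x') ≤ MIf f J := by
  have hp : ∀ x', ∑ y, ∑ x, J x y * K x x' = ∑ x, (∑ y, J x y) * K x x' := fun x' => by
    rw [Finset.sum_comm]
    simp only [Finset.sum_mul]
  have hq : ∀ y, ∑ x', ∑ x, J x y * K x x' = ∑ x, J x y := fun y => by
    rw [Finset.sum_comm]
    simp only [← Finset.mul_sum, hKsum, mul_one]
  unfold MIf
  simp only [hp, hq]
  calc _ ≤ ∑ x', ∑ y, ∑ x, J x y * K x x' *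
        f ((∑ y', J x y') * (∑ x₁, J x₁ y) / J x y) := by
        refine Finset.sum_le_sum fun x' _ => Finset.sum_le_sum fun y _ => ?_
        have h := sum_mul_map_div_le hf (fun x => J x y * K x x')
          (fun x => (∑ y', J x y') * K x x' * (∑ x₁, J x₁ y))
          (fun x => mul_pos (hJpos x y) (hKpos x x'))
        rw [← Finset.sum_mul] at h
        refine h.trans_eq (Finset.sum_congr rfl fun x _ => ?_)
        rw [mul_right_comm (∑ y', J x y'), mul_div_mul_right _ _ (hKpos x x').ne']
    _ = ∑ y, ∑ x, ∑ x', J x y * K x x' *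
        f ((∑ y', J x y') * (∑ x₁, J x₁ y) / J x y) := by
        rw [Finset.sum_comm]
        exact Finset.sum_congr rfl fun y _ => Finset.sum_comm
    _ = _ := by
        rw [Finset.sum_comm]
        simp only [← Finset.sum_mul, ← Finset.mul_sum, hKsum, mul_one]
end

section
/- Conditional data processing inequality: Let Σ_X, Σ_{X'}, Σ_Y, Σ_Z be finite nonempty types, let J be a joint probability distribution on Σ_X × Σ_Y × Σ_Z with J(x,y,z) > 0 for all (x,y,z), let g : Σ_X → Σ_{X'} be surjective, and let f : ℝ → ℝ be convex with f(1) = 0. Then MI^f(g(X); Y | Z) ≤ MI^f(X; Y | Z), where the joint distribution of (g(X),Y,Z) assigns to (x',y,z) the mass Σ_{x : g(x)=x'} J(x,y,z). -/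
/-!
Conditionally on `Z = z`, the quantity `J x y * f (p x * q y / J x y)` is the value at
`(p x * q y, J x y)` of the perspective `(a, w) ↦ w * f (a / w)` of the convex function `f`. The
perspective is jointly convex and positively homogeneous, hence subadditive
(`ConvexOn.perspective_sum_le`). Coarse-graining by `g` replaces both `J x y` and `p x * q y` by
their sums over the fibre of `g`, so subadditivity on each fibre gives the unconditional inequality
`MIf_map_le`. The conditional inequality is its average over `z`, because pushing forward along `g`
commutes with conditioning on `z` and leaves the law of `Z` unchanged.
-/

open Finset

/-- The conditional f-mutual information `MI^f(X;Y|Z)` of a joint distribution `J`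
of `(X,Y,Z)`: `∑ z, P[Z=z] * MI^f(X;Y|Z=z)`. -/
noncomputable def condMIf {A B C : Type*} [Fintype A] [Fintype B] [Fintype C]
    (f : ℝ → ℝ) (J : A → B → C → ℝ) : ℝ :=
  ∑ z, (∑ x, ∑ y, J x y z) * MIf f (fun x y => J x y z / ∑ x', ∑ y', J x' y' z)

/-- Subadditivity of the perspective `(a, w) ↦ w * f (a / w)` of a convex function `f`; this is
Jensen's inequality with weights `w i` at the points `a i / w i`. For empty `t`, both sides are
zero. -/
theorem ConvexOn.perspective_sum_le {ι : Type*} {f : ℝ → ℝ} (hf : ConvexOn ℝ Set.univ f)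
    (t : Finset ι) (a w : ι → ℝ) (hw : ∀ i ∈ t, 0 < w i) :
    (∑ i ∈ t, w i) * f ((∑ i ∈ t, a i) / ∑ i ∈ t, w i) ≤ ∑ i ∈ t, w i * f (a i / w i) := by
  rcases t.eq_empty_or_nonempty with rfl | ht
  · simp
  have hW : 0 < ∑ i ∈ t, w i := Finset.sum_pos hw ht
  have jensen := hf.map_centerMass_le (t := t) (w := w) (p := fun i => a i / w i)
    (fun i hi => (hw i hi).le) hW (fun _ _ => Set.mem_univ _)
  have ha : ∑ i ∈ t, w i * (a i / w i) = ∑ i ∈ t, a i :=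
    Finset.sum_congr rfl fun i hi => mul_div_cancel₀ _ (hw i hi).ne'
  simp only [Finset.centerMass, smul_eq_mul, Function.comp_apply, ha] at jensen
  rw [inv_mul_eq_div, inv_mul_eq_div, le_div_iff₀ hW] at jensen
  linarith

/-- Data processing for the unconditional f-mutual information: coarse-graining the first
variable by `g` does not increase it. -/
theorem MIf_map_le {A A' B : Type*} [Fintype A] [Fintype A'] [DecidableEq A'] [Fintype B]
    (J : A → B → ℝ) (g : A → A') (f : ℝ → ℝ) (hpos : ∀ x y, 0 < J x y)
    (hf : ConvexOn ℝ Set.univ f) :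
    MIf f (fun x' y => ∑ x ∈ Finset.univ.filter (fun x => g x = x'), J x y) ≤ MIf f J := by
  unfold MIf
  rw [← Finset.sum_fiberwise Finset.univ g
    (fun x => ∑ y, J x y * f ((∑ y', J x y') * (∑ x', J x' y) / J x y))]
  refine Finset.sum_le_sum fun x' _ => ?_
  rw [Finset.sum_comm (s := Finset.univ.filter (fun x => g x = x'))]
  refine Finset.sum_le_sum fun y _ => ?_
  rw [Finset.sum_fiberwise Finset.univ g (fun x => J x y), Finset.sum_comm]
  have key := hf.perspective_sum_le (Finset.univ.filter (fun x => g x = x'))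
    (fun x => (∑ y', J x y') * ∑ x', J x' y) (fun x => J x y) fun x _ => hpos x y
  rw [← Finset.sum_mul] at key
  exact key

/-- Conditional data processing inequality: for any surjective `g`,
`MI^f(g(X);Y|Z) ≤ MI^f(X;Y|Z)`. -/
theorem condMIf_data_processing {A A' B C : Type*}
    [Fintype A] [Nonempty A] [Fintype A'] [Nonempty A'] [DecidableEq A']
    [Fintype B] [Nonempty B] [Fintype C] [Nonempty C]
    (J : A → B → C → ℝ) (g : A → A') (f : ℝ → ℝ)
    (hpos : ∀ x y z, 0 < J x y z) (hsum : ∑ x, ∑ y, ∑ z, J x y z = 1)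
    (hg : Function.Surjective g)
    (hf : ConvexOn ℝ Set.univ f) (hf1 : f 1 = 0) :
    condMIf f (fun x' y z => ∑ x ∈ Finset.univ.filter (fun x => g x = x'), J x y z)
      ≤ condMIf f J := by
  unfold condMIf
  -- The law of `Z` is the same before and after applying `g`.
  have hZ (z : C) : ∑ x', ∑ y, ∑ x ∈ Finset.univ.filter (fun x => g x = x'), J x y z
      = ∑ x, ∑ y, J x y z := by
    rw [← Finset.sum_fiberwise Finset.univ g (fun x => ∑ y, J x y z)]
    exact Finset.sum_congr rfl fun _ _ => Finset.sum_comm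
  have hZpos (z : C) : 0 < ∑ x, ∑ y, J x y z :=
    Finset.sum_pos (fun x _ => Finset.sum_pos (fun y _ => hpos x y z) Finset.univ_nonempty)
      Finset.univ_nonempty
  refine Finset.sum_le_sum fun z _ => ?_
  simp only [hZ, Finset.sum_div]
  exact mul_le_mul_of_nonneg_left
    (MIf_map_le _ g f (fun x y => div_pos (hpos x y z) (hZpos z)) hf) (hZpos z).le
end

section
/- Dominant truthfulness of the HMIP payment: Let M be a finite index set, let Σ_X be a finite nonempty type, and for each m ∈ M let Σ_{Y_m} and Σ_{Z_m} be finite nonempty types. Let all of (X, (Y_m)_{m∈M}, (Z_m)_{m∈M}) be jointly distributed with a strictly positive joint probability distribution on the product type. Let f : ℝ → ℝ be convex with f(1) = 0, let α_m ≥ 0 for each m ∈ M, let Σ_{X'} be a finite type, and let g : Σ_X → Σ_{X'} be any surjective function (a report strategy). Then Σ_{m∈M} α_m · MI^f(g(X); Y_m | Z_m) ≤ Σ_{m∈M} α_m · MI^f(X; Y_m | Z_m); that is, applying any function to the honest information cannot increase the total payment. -/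
/-! This is the data processing inequality for conditional `f`-mutual information. Conditionally on
`Z = z`, replacing `X` by `g X` merges the rows `x ∈ g ⁻¹' {x'}` of the joint distribution: both
`J x y` and the marginal `p x` get summed over the fibre, while `q y` is unchanged. The perspective
`(a, w) ↦ w * f (a / w)` of a convex function is subadditive (Jensen's inequality,
`ConvexOn.sum_mul_div_le`), so each entry of the merged sum is at most the sum of the entries it
replaces. Since the law of `Z` is unchanged as well, averaging over `z` and then over `m` with
weights `α m ≥ 0` preserves the inequality. -/

open Finset

/-- Subadditivity of the perspective of a convex function. -/
lemma ConvexOn.sum_mul_div_le {ι : Type*} {f : ℝ → ℝ} (hf : ConvexOn ℝ Set.univ f)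
    (s : Finset ι) (w a : ι → ℝ) (hw : ∀ i ∈ s, 0 < w i) :
    (∑ i ∈ s, w i) * f ((∑ i ∈ s, a i) / ∑ i ∈ s, w i) ≤ ∑ i ∈ s, w i * f (a i / w i) := by
  rcases s.eq_empty_or_nonempty with rfl | hs
  · simp
  have hW : 0 < ∑ i ∈ s, w i := Finset.sum_pos hw hs
  have h := hf.map_sum_le (t := s) (w := fun i => w i / ∑ i ∈ s, w i) (p := fun i => a i / w i)
    (fun i hi => (div_pos (hw i hi) hW).le)
    (by rw [← Finset.sum_div, div_self hW.ne']) (fun _ _ => Set.mem_univ _)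
  have e1 : ∑ i ∈ s, (w i / ∑ i ∈ s, w i) • (a i / w i) = (∑ i ∈ s, a i) / ∑ i ∈ s, w i := by
    rw [Finset.sum_div]
    refine Finset.sum_congr rfl fun i hi => ?_
    have := (hw i hi).ne'
    rw [smul_eq_mul]
    field_simp
  have e2 : ∑ i ∈ s, (w i / ∑ i ∈ s, w i) • f (a i / w i)
      = (∑ i ∈ s, w i * f (a i / w i)) / ∑ i ∈ s, w i := by
    rw [Finset.sum_div]
    refine Finset.sum_congr rfl fun i _ => ?_
    rw [smul_eq_mul]
    ring
  rw [e1, e2, le_div_iff₀ hW] at h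
  linarith

/-- Data processing inequality for `MIf`. It holds for positive weights of any total mass. -/
lemma MIf_fiber_sum_le {A A' B : Type*} [Fintype A] [Fintype A'] [DecidableEq A'] [Fintype B]
    {f : ℝ → ℝ} (hf : ConvexOn ℝ Set.univ f) (J : A → B → ℝ) (hJ : ∀ x y, 0 < J x y) (g : A → A') :
    MIf f (fun x' y => ∑ x ∈ Finset.univ.filter (fun x => g x = x'), J x y) ≤ MIf f J := by
  unfold MIf
  rw [← Finset.sum_fiberwise (s := Finset.univ) (g := g)]
  refine Finset.sum_le_sum fun x' _ => ?_
  rw [Finset.sum_comm (s := Finset.univ.filter (fun x => g x = x'))]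
  refine Finset.sum_le_sum fun y _ => ?_
  have h := hf.sum_mul_div_le (Finset.univ.filter (fun x => g x = x')) (fun x => J x y)
    (fun x => (∑ y', J x y') * ∑ x', J x' y) fun x _ => hJ x y
  rw [← Finset.sum_mul, Finset.sum_comm] at h
  rw [Finset.sum_fiberwise]
  exact h

/-- Data processing inequality for `condMIf`. -/
lemma condMIf_fiber_sum_le {A A' B C : Type*} [Fintype A] [Nonempty A] [Fintype A']
    [DecidableEq A'] [Fintype B] [Nonempty B] [Fintype C]
    {f : ℝ → ℝ} (hf : ConvexOn ℝ Set.univ f) (J : A → B → C → ℝ) (hJ : ∀ x y z, 0 < J x y z)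
    (g : A → A') :
    condMIf f (fun x' y z => ∑ x ∈ Finset.univ.filter (fun x => g x = x'), J x y z)
      ≤ condMIf f J := by
  unfold condMIf
  refine Finset.sum_le_sum fun z _ => ?_
  have hW : 0 < ∑ x, ∑ y, J x y z :=
    Finset.sum_pos (fun x _ => Finset.sum_pos (fun y _ => hJ x y z) Finset.univ_nonempty)
      Finset.univ_nonempty
  have hsum : ∑ x', ∑ y, ∑ x ∈ Finset.univ.filter (fun x => g x = x'), J x y z
      = ∑ x, ∑ y, J x y z := by
    rw [← Finset.sum_fiberwise (s := Finset.univ) (g := g)]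
    exact Finset.sum_congr rfl fun x' _ => Finset.sum_comm
  simp only [hsum, Finset.sum_div]
  exact mul_le_mul_of_nonneg_left
    (MIf_fiber_sum_le hf (fun x y => J x y z / ∑ x, ∑ y, J x y z)
      (fun x y => div_pos (hJ x y z) hW) g) hW.le

/-- Dominant truthfulness of the HMIP payment: for any report strategy `g`
applied to the agent's honest information `X`, the total payment
`∑ m, α m * MI^f(g(X); Y_m | Z_m)` is at most `∑ m, α m * MI^f(X; Y_m | Z_m)`. -/
theorem hmip_dominant_truthful
    {M : Type*} [Fintype M] [DecidableEq M]
    {SX SX' : Type*} [Fintype SX] [Nonempty SX] [Fintype SX'] [DecidableEq SX']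
    {Y Z : M → Type*}
    [∀ m, Fintype (Y m)] [∀ m, Nonempty (Y m)] [∀ m, DecidableEq (Y m)]
    [∀ m, Fintype (Z m)] [∀ m, Nonempty (Z m)] [∀ m, DecidableEq (Z m)]
    (P : SX → (∀ m, Y m) → (∀ m, Z m) → ℝ)
    (hpos : ∀ x ys zs, 0 < P x ys zs)
    (hsum : ∑ x, ∑ ys, ∑ zs, P x ys zs = 1)
    (f : ℝ → ℝ) (hf : ConvexOn ℝ Set.univ f) (hf1 : f 1 = 0)
    (α : M → ℝ) (hα : ∀ m, 0 ≤ α m)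
    (g : SX → SX') (hg : Function.Surjective g) :
    ∑ m, α m * condMIf f (fun (x' : SX') (y : Y m) (z : Z m) =>
        ∑ x ∈ Finset.univ.filter (fun x => g x = x'),
          ∑ ys ∈ Finset.univ.filter (fun ys => ys m = y),
            ∑ zs ∈ Finset.univ.filter (fun zs => zs m = z), P x ys zs)
      ≤ ∑ m, α m * condMIf f (fun (x : SX) (y : Y m) (z : Z m) =>
          ∑ ys ∈ Finset.univ.filter (fun ys => ys m = y),
            ∑ zs ∈ Finset.univ.filter (fun zs => zs m = z), P x ys zs) := by
  refine Finset.sum_le_sum fun m _ => mul_le_mul_of_nonneg_left ?_ (hα m)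
  refine condMIf_fiber_sum_le hf _ (fun x y z => ?_) g
  -- The fibres `ys m = y` and `zs m = z` are nonempty because every coordinate type is.
  refine Finset.sum_pos (fun ys _ => Finset.sum_pos (fun zs _ => hpos x ys zs) ?_) ?_
  · exact ⟨Function.update (fun _ => Classical.arbitrary _) m z, by simp⟩
  · exact ⟨Function.update (fun _ => Classical.arbitrary _) m y, by simp⟩
end

section
/- Equality case of information monotonicity of proper scoring rules: Let Σ_X, Σ_Y, Σ_Z be finite nonempty types, let (X,Y,Z) have a joint probability distribution, and let PS be a strictly proper scoring rule on Σ_Y. Then E_{X,Y,Z}[ PS(Y, P[·|X,Z]) ] = E_{X,Y}[ PS(Y, P[·|X]) ] holds if and only if P[·|X=x,Z=z] = P[·|X=x] (as distributions on Σ_Y) for every pair (x,z) with P[X=x,Z=z] > 0. -/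
open Finset

/-!
Summing over `y` first, both sides are sums over pairs `(x, z)`. For a pair of positive mass the
vector `P x · z` is a positive multiple of the posterior `P[·|X=x,Z=z]`, so strict properness says
that replacing this posterior by `P[·|X=x]` strictly lowers the term at `(x, z)` unless the two
distributions agree (`score_lt_of_ne_normalized`). Pairs of zero mass contribute zero to both sides.
Hence the left side dominates termwise, and two termwise-ordered finite sums agree iff all their
terms do.
-/

/-- Strict properness for an unnormalized nonzero weight `w`: reporting anything other than the
normalization of `w` gives a strictly smaller `w`-weighted score. -/
lemma score_lt_of_ne_normalized {S : Type*} [Fintype S] (PS : S → (S → ℝ) → ℝ)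
    (hPS : ∀ p q : S → ℝ, (∀ y, 0 ≤ p y) → ∑ y, p y = 1 →
      (∀ y, 0 ≤ q y) → ∑ y, q y = 1 → q ≠ p →
      ∑ y, p y * PS y q < ∑ y, p y * PS y p)
    (w q : S → ℝ) (hw : ∀ y, 0 ≤ w y) (hpos : 0 < ∑ y, w y)
    (hq : ∀ y, 0 ≤ q y) (hq1 : ∑ y, q y = 1) (hne : q ≠ fun y => w y / ∑ y', w y') :
    ∑ y, w y * PS y q < ∑ y, w y * PS y (fun y' => w y' / ∑ y'', w y'') := by
  have h := hPS (fun y => w y / ∑ y', w y') q (fun y => div_nonneg (hw y) hpos.le)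
    (by rw [← Finset.sum_div, div_self hpos.ne']) hq hq1 hne
  simp only [div_mul_eq_mul_div, ← Finset.sum_div] at h
  exact (div_lt_div_iff_of_pos_right hpos).1 h

/-- Equality case of information monotonicity of strictly proper scoring rules:
the expected scores with and without the extra information `Z` coincide iff the
conditional distribution of `Y` given `(X,Z)` equals that given `X` alone,
for every `(x,z)` of positive probability. -/
theorem ps_information_monotonicity_eq_iff
    {SX SY SZ : Type*} [Fintype SX] [Nonempty SX] [Fintype SY] [Nonempty SY]
    [Fintype SZ] [Nonempty SZ]
    (P : SX → SY → SZ → ℝ)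
    (hnn : ∀ x y z, 0 ≤ P x y z) (hsum : ∑ x, ∑ y, ∑ z, P x y z = 1)
    (PS : SY → (SY → ℝ) → ℝ)
    (hPS : ∀ p q : SY → ℝ, (∀ y, 0 ≤ p y) → ∑ y, p y = 1 →
      (∀ y, 0 ≤ q y) → ∑ y, q y = 1 → q ≠ p →
      ∑ y, p y * PS y q < ∑ y, p y * PS y p) :
    (∑ x, ∑ y, ∑ z, P x y z *
        PS y (fun y' => P x y' z / (∑ y'', P x y'' z))
      = ∑ x, ∑ y, ∑ z, P x y z *
          PS y (fun y' => (∑ z', P x y' z') / (∑ y'', ∑ z', P x y'' z')))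
    ↔ (∀ x z, 0 < ∑ y, P x y z → ∀ y',
        P x y' z / (∑ y'', P x y'' z)
          = (∑ z', P x y' z') / (∑ y'', ∑ z', P x y'' z')) := by
  have hmarg : ∀ x z, 0 < ∑ y, P x y z → 0 < ∑ y, ∑ z', P x y z' := fun x z h =>
    h.trans_le (Finset.sum_le_sum fun y _ =>
      Finset.single_le_sum (f := fun z' => P x y z') (fun z' _ => hnn x y z') (Finset.mem_univ z))
  have hlt : ∀ x z, 0 < ∑ y, P x y z →
      (fun y' => (∑ z', P x y' z') / (∑ y'', ∑ z', P x y'' z'))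
        ≠ (fun y' => P x y' z / (∑ y'', P x y'' z)) →
      ∑ y, P x y z * PS y (fun y' => (∑ z', P x y' z') / (∑ y'', ∑ z', P x y'' z'))
        < ∑ y, P x y z * PS y (fun y' => P x y' z / (∑ y'', P x y'' z)) := by
    intro x z hpos hne
    have hm := hmarg x z hpos
    exact score_lt_of_ne_normalized PS hPS (fun y => P x y z) _ (fun y => hnn x y z) hpos
      (fun y => div_nonneg (Finset.sum_nonneg fun z' _ => hnn x y z') hm.le)
      (by rw [← Finset.sum_div, div_self hm.ne']) hne
  have hzero : ∀ x z, ¬ 0 < ∑ y, P x y z → ∀ y, P x y z = 0 := by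
    intro x z h y
    have h0 : ∑ y, P x y z = 0 := le_antisymm (not_lt.1 h) (Finset.sum_nonneg fun y _ => hnn x y z)
    exact (Finset.sum_eq_zero_iff_of_nonneg fun y _ => hnn x y z).1 h0 y (Finset.mem_univ y)
  have hle : ∀ x z,
      ∑ y, P x y z * PS y (fun y' => (∑ z', P x y' z') / (∑ y'', ∑ z', P x y'' z'))
        ≤ ∑ y, P x y z * PS y (fun y' => P x y' z / (∑ y'', P x y'' z)) := by
    intro x z
    by_cases hpos : 0 < ∑ y, P x y z
    · by_cases he : (fun y' => (∑ z', P x y' z') / (∑ y'', ∑ z', P x y'' z'))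
          = (fun y' => P x y' z / (∑ y'', P x y'' z))
      · rw [he]
      · exact (hlt x z hpos he).le
    · simp [hzero x z hpos]
  have hswap : ∀ f : SX → SY → SZ → ℝ, ∑ x, ∑ y, ∑ z, f x y z = ∑ x, ∑ z, ∑ y, f x y z :=
    fun f => Finset.sum_congr rfl fun x _ => Finset.sum_comm
  rw [hswap, hswap, eq_comm,
    Finset.sum_eq_sum_iff_of_le fun x _ => Finset.sum_le_sum fun z _ => hle x z]
  simp only [Finset.sum_eq_sum_iff_of_le fun z _ => hle _ z, Finset.mem_univ, true_imp_iff]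
  refine forall_congr' fun x => forall_congr' fun z => ⟨fun h hpos y' => ?_, fun h => ?_⟩
  · by_contra hne
    exact (hlt x z hpos fun he => hne (congrFun he y').symm).ne h
  · by_cases hpos : 0 < ∑ y, P x y z
    · rw [funext (h hpos)]
    · simp [hzero x z hpos]
end
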